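/- Let f be a cellular automaton on A^ℤ. If f is the identity map on its generic limit set ω̃(f), then ω̃(f) is a mixing subshift. -/

import Mathlib

open Filter Set Function

namespace Gls

variable {A : Type*}

/-- The left shift map on `A^ℤ`. -/
def shift (x : ℤ → A) : ℤ → A := fun i => x (i + 1)

/-- A cellular automaton: a continuous shift-commuting self-map of the full shift. -/
def IsCA [TopologicalSpace A] (f : (ℤ → A) → (ℤ → A)) : Prop :=
  Continuous f ∧ f ∘ shift = shift ∘ f

/-- The set of limit points of the forward orbit of `x` under `f`. -/
def omegaSet [TopologicalSpace A] (f : (ℤ → A) → (ℤ → A)) (x : ℤ → A) : Set (ℤ → A) :=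
  {y | MapClusterPt y atTop fun t => f^[t] x}

/-- The realm of attraction of `Y`. -/
def realm [TopologicalSpace A] (f : (ℤ → A) → (ℤ → A)) (Y : Set (ℤ → A)) : Set (ℤ → A) :=
  {x | omegaSet f x ⊆ Y}

/-- The generic limit set: the intersection of all closed sets whose realm is comeager. -/
def genLimitSet [TopologicalSpace A] (f : (ℤ → A) → (ℤ → A)) : Set (ℤ → A) :=
  ⋂₀ {C | IsClosed C ∧ realm f C ∈ residual (ℤ → A)}

/-- The word `x_{[i, i+n)}` of length `n` read in the configuration `x` from position `i`. -/
def word (x : ℤ → A) (i : ℤ) (n : ℕ) : List A :=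
  (List.range n).map fun k => x (i + k)

/-- The cylinder set `[w]_i`. -/
def cylinder (w : List A) (i : ℤ) : Set (ℤ → A) := {x | word x i w.length = w}

/-- The language of `X`: all finite words occurring in points of `X`. -/
def lang (X : Set (ℤ → A)) : Set (List A) :=
  {w | ∃ x ∈ X, ∃ i : ℤ, word x i w.length = w}


/-- A subshift `X` is mixing if for all `u, v ∈ L(X)` there exists `N` such that for every
`n ≥ N` there is a word `w` of length `n` with `u w v ∈ L(X)`. -/
def IsMixing {A : Type*} (X : Set (ℤ → A)) : Prop :=
  ∀ u ∈ lang X, ∀ v ∈ lang X, ∃ N : ℕ, ∀ n ≥ N, ∃ w : List A,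
    w.length = n ∧ u ++ w ++ v ∈ lang X

/-- Shift by `k`. -/
def sh (k : ℤ) (x : ℤ → A) : ℤ → A := fun i => x (i + k)

theorem sh_sh (a b : ℤ) (x : ℤ → A) : sh a (sh b x) = sh (a + b) x := by
  funext i; simp [sh, add_assoc]

theorem sh_zero (x : ℤ → A) : sh 0 x = x := by
  funext i; simp [sh]

def shHomeo [TopologicalSpace A] (k : ℤ) : (ℤ → A) ≃ₜ (ℤ → A) where
  toFun := sh k
  invFun := sh (-k)
  left_inv x := by rw [sh_sh]; simp [sh_zero]
  right_inv x := by rw [sh_sh]; simp [sh_zero]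
  continuous_toFun := continuous_pi fun i => continuous_apply (i + k)
  continuous_invFun := continuous_pi fun i => continuous_apply (i + -k)

theorem sh_residual [TopologicalSpace A] (k : ℤ) {S : Set (ℤ → A)}
    (hS : S ∈ residual (ℤ → A)) : sh k ⁻¹' S ∈ residual (ℤ → A) :=
  tendsto_residual_of_isOpenMap (shHomeo (A := A) k).continuous (shHomeo (A := A) k).isOpenMap hS

theorem comm_sh [TopologicalSpace A] {f : (ℤ → A) → (ℤ → A)} (hf : IsCA f) (k : ℤ)
    (x : ℤ → A) : f (sh k x) = sh k (f x) := by
  have h1 : ∀ x, f (sh 1 x) = sh 1 (f x) := fun x => congrFun hf.2 x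
  have hm : ∀ x, f (sh (-1) x) = sh (-1) (f x) := by
    intro x
    have := h1 (sh (-1) x)
    rw [sh_sh] at this
    simp only [add_neg_cancel, sh_zero] at this
    rw [this, sh_sh]; simp [sh_zero]
  induction k with
  | zero => simp [sh_zero]
  | succ n ih =>
    rw [add_comm, ← sh_sh, h1, ih, sh_sh]
  | pred n ih =>
    rw [sub_eq_add_neg, add_comm, ← sh_sh, hm, ih, sh_sh]

theorem iter_sh [TopologicalSpace A] {f : (ℤ → A) → (ℤ → A)} (hf : IsCA f) (k : ℤ) (t : ℕ)
    (x : ℤ → A) : f^[t] (sh k x) = sh k (f^[t] x) := by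
  induction t with
  | zero => rfl
  | succ n ih => rw [iterate_succ_apply', iterate_succ_apply', ih, comm_sh hf]

theorem omega_sh [TopologicalSpace A] {f : (ℤ → A) → (ℤ → A)} (hf : IsCA f) (k : ℤ)
    {x y : ℤ → A} (h : y ∈ omegaSet f x) : sh k y ∈ omegaSet f (sh k x) := by
  have h2 : MapClusterPt y atTop fun t => f^[t] x := h
  have := h2.continuousAt_comp (f := sh k) (shHomeo k).continuous.continuousAt
  change MapClusterPt _ _ _
  simp only [iter_sh hf]
  exact this

theorem gl_sh [TopologicalSpace A] {f : (ℤ → A) → (ℤ → A)} (hf : IsCA f) (k : ℤ)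
    {x : ℤ → A} (h : x ∈ genLimitSet f) : sh k x ∈ genLimitSet f := by
  rintro C ⟨hC, hr⟩
  refine h (sh k ⁻¹' C) ⟨hC.preimage (shHomeo k).continuous, ?_⟩
  filter_upwards [sh_residual k hr] with z hz y hy
  exact hz (omega_sh hf k hy)

theorem gl_closed [TopologicalSpace A] (f : (ℤ → A) → (ℤ → A)) : IsClosed (genLimitSet f) :=
  isClosed_sInter fun _ h => h.1

theorem gl_realm [TopologicalSpace A] [Finite A] [DiscreteTopology A]
    (f : (ℤ → A) → (ℤ → A)) : realm f (genLimitSet f) ∈ residual (ℤ → A) := by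
  obtain ⟨T, hT, hTS, hU⟩ := TopologicalSpace.isOpen_sUnion_countable
    (compl '' {C | IsClosed C ∧ realm f C ∈ residual (ℤ → A)}) (by
      rintro _ ⟨C, hC, rfl⟩; exact hC.1.isOpen_compl)
  have : ∀ s ∈ T, realm f sᶜ ∈ residual (ℤ → A) := by
    intro s hs
    obtain ⟨C, hC, rfl⟩ := hTS hs
    simpa using hC.2
  filter_upwards [(countable_bInter_mem hT).2 this] with x hx y hy C hC
  by_contra hyC
  have : y ∈ ⋃₀ T := by rw [hU]; exact ⟨Cᶜ, ⟨C, hC, rfl⟩, hyC⟩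
  obtain ⟨s, hs, hys⟩ := this
  exact (mem_iInter₂.1 hx s hs) hy hys

theorem ev_mem [TopologicalSpace A] [Finite A]
    (f : (ℤ → A) → (ℤ → A)) {x : ℤ → A} {O : Set (ℤ → A)} (hO : IsOpen O)
    (h : omegaSet f x ⊆ O) : ∀ᶠ t in atTop, f^[t] x ∈ O := by
  by_contra hc
  have : ∃ᶠ t in atTop, f^[t] x ∈ Oᶜ := not_eventually.1 hc
  obtain ⟨a, ha, ha2⟩ := hO.isClosed_compl.isCompact.exists_mapClusterPt_of_frequently this
  exact ha (h ha2)

theorem conv [TopologicalSpace A] [Finite A] [DiscreteTopology A]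
    {f : (ℤ → A) → (ℤ → A)} (hf : IsCA f) (hid : ∀ x ∈ genLimitSet f, f x = x)
    {x : ℤ → A} (hx : x ∈ realm f (genLimitSet f)) :
    ∃ y ∈ genLimitSet f, Tendsto (fun t => f^[t] x) atTop (nhds y) := by
  have h1 : ∀ l : ℤ, ∃ a, ∀ᶠ t in atTop, f^[t] x l = a := by
    intro l
    have hO : IsOpen {z : ℤ → A | f z l = z l} := by
      have hc : Continuous fun z : ℤ → A => (f z l, z l) :=
        ((continuous_apply l).comp hf.1).prodMk (continuous_apply l)
      exact (isOpen_discrete {p : A × A | p.1 = p.2}).preimage hc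
    have := ev_mem f hO (x := x) (fun z hz => by
      change f z l = z l
      rw [hid z (hx hz)])
    obtain ⟨T, hT⟩ := eventually_atTop.1 this
    refine ⟨f^[T] x l, eventually_atTop.2 ⟨T, fun t ht => ?_⟩⟩
    induction t, ht using Nat.le_induction with
    | base => rfl
    | succ n hn ih =>
      rw [iterate_succ_apply', ← ih]
      exact hT n hn
  choose y hy using h1
  have ht : Tendsto (fun t => f^[t] x) atTop (nhds y) := by
    rw [tendsto_pi_nhds]
    intro l
    exact tendsto_nhds_of_eventually_eq (hy l)
  exact ⟨y, hx ht.mapClusterPt, ht⟩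

theorem exists_open [TopologicalSpace A] [Finite A] [DiscreteTopology A]
    {f : (ℤ → A) → (ℤ → A)} (hf : IsCA f) {U : Set (ℤ → A)} (hU : IsClopen U)
    {z : ℤ → A} (hz : z ∈ genLimitSet f) (hzU : z ∈ U) :
    ∃ V : Set (ℤ → A), IsOpen V ∧ V.Nonempty ∧
      {x | x ∈ V → ∃ᶠ t in atTop, f^[t] x ∈ U} ∈ residual (ℤ → A) := by
  borelize (ℤ → A)
  let E : Set (ℤ → A) := {x | ∃ᶠ t in atTop, f^[t] x ∈ U}
  have hE : MeasurableSet E := by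
    have : E = ⋂ n : ℕ, ⋃ t : ℕ, ⋃ _ : n ≤ t, f^[t] ⁻¹' U := by
      ext x
      simp [E, frequently_atTop]
    rw [this]
    exact MeasurableSet.iInter fun n => MeasurableSet.iUnion fun t => MeasurableSet.iUnion fun _ =>
      (hU.isOpen.preimage (hf.1.iterate t)).measurableSet
  obtain ⟨V, hV, hEV⟩ := hE.residualEq_isOpen
  refine ⟨V, hV, ?_, ?_⟩
  · rw [nonempty_iff_ne_empty]
    rintro rfl
    have : realm f (genLimitSet f \ U) ∈ residual (ℤ → A) := by
      filter_upwards [gl_realm f, hEV] with x hx hxE y hy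
      refine ⟨hx hy, fun hyU => ?_⟩
      have h1 : x ∈ E := by
        have h2 : MapClusterPt y atTop fun t => f^[t] x := hy
        exact h2.frequently (hU.isOpen.mem_nhds hyU)
      have h3 : E x = (∅ : Set (ℤ → A)) x := hxE
      have h4 : x ∈ (∅ : Set (ℤ → A)) := by
        change (∅ : Set (ℤ → A)) x
        rw [← h3]; exact h1
      exact h4
    exact (hz _ ⟨(gl_closed f).sdiff hU.isOpen, this⟩).2 hzU
  · filter_upwards [hEV] with x hx hxV
    have h3 : E x = V x := hx
    change E x
    rw [h3]; exact hxV

theorem open_window [TopologicalSpace A] [DiscreteTopology A] {V : Set (ℤ → A)} (hV : IsOpen V)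
    {p : ℤ → A} (hp : p ∈ V) :
    ∃ N : ℕ, ∀ x : ℤ → A, (∀ l : ℤ, l.natAbs ≤ N → x l = p l) → x ∈ V := by
  obtain ⟨I, u, hu, hI⟩ := isOpen_pi_iff.1 hV p hp
  refine ⟨I.sup Int.natAbs, fun x hx => hI ?_⟩
  intro l hl
  rw [hx l (Finset.le_sup (f := Int.natAbs) hl)]
  exact (hu l hl).2

theorem word_eq (x : ℤ → A) (i : ℤ) (n : ℕ) :
    word x i n = (List.range n).map fun k : ℕ => x (i + (k : ℤ)) := by
  have : ∀ l : List ℕ, (List.flatMap (fun a : ℕ => [(a : ℤ)]) l) = l.map fun a : ℕ => (a : ℤ) := by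
    intro l
    induction l with
    | nil => rfl
    | cons a l ih => simp [ih]
  simp [word, this]

theorem word_add (x : ℤ → A) (i : ℤ) (a b : ℕ) :
    word x i (a + b) = word x i a ++ word x (i + a) b := by
  simp [word_eq, List.range_add, add_assoc]

theorem word_length (x : ℤ → A) (i : ℤ) (a : ℕ) : (word x i a).length = a := by
  simp [word]

theorem word_sh (x : ℤ → A) (i k : ℤ) (a : ℕ) : word (sh k x) i a = word x (i + k) a := by
  simp [word, sh, add_right_comm]

theorem cyl_clopen [TopologicalSpace A] [DiscreteTopology A] (w : List A) (i : ℤ) :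
    IsClopen (cylinder w i) := by
  have : cylinder w i = ⋂ k : Fin w.length, (fun x : ℤ → A => x (i + (k : ℕ))) ⁻¹' {w[k]} := by
    ext x
    simp only [cylinder, mem_ofPred_eq, mem_iInter, mem_preimage, mem_singleton_iff]
    rw [List.ext_getElem_iff]
    simp [word_eq, Fin.forall_iff]
  rw [this]
  exact isClopen_iInter_of_finite fun k => (isClopen_discrete _).preimage (continuous_apply _)

/-- if `f` is the identity on its generic limit set, then `ω̃(f)` is a mixing
subshift. -/
theorem stmt8 [Fintype A] [Nonempty A] [TopologicalSpace A] [DiscreteTopology A]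
    (f : (ℤ → A) → (ℤ → A)) (hf : IsCA f)
    (hid : ∀ x ∈ genLimitSet f, f x = x) :
    IsClosed (genLimitSet f) ∧ shift '' genLimitSet f = genLimitSet f ∧
      IsMixing (genLimitSet f) := by
  refine ⟨gl_closed f, ?_, ?_⟩
  · apply Subset.antisymm
    · rintro _ ⟨x, hx, rfl⟩
      exact gl_sh hf 1 hx
    · intro x hx
      refine ⟨sh (-1) x, gl_sh hf _ hx, ?_⟩
      change sh 1 (sh (-1) x) = x
      rw [sh_sh]; simp [sh_zero]
  · rintro u ⟨z, hz, i, hzi⟩ v ⟨z', hz', j, hzj⟩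
    obtain ⟨V, hV, ⟨p, hp⟩, hVr⟩ := exists_open hf (cyl_clopen u i) hz hzi
    obtain ⟨V', hV', ⟨q, hq⟩, hVr'⟩ := exists_open hf (cyl_clopen v j) hz' hzj
    obtain ⟨N₁, hN₁⟩ := open_window hV hp
    obtain ⟨N₂, hN₂⟩ := open_window hV' hq
    refine ⟨N₁ + N₂ + 1 + i.natAbs + j.natAbs, fun n hn => ?_⟩
    obtain ⟨k, hk⟩ : ∃ k : ℤ, k = i + u.length + n - j := ⟨_, rfl⟩
    have hne : (V ∩ sh k ⁻¹' V').Nonempty := by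
      refine ⟨fun l => if l ≤ N₁ then p l else q (l - k), hN₁ _ fun l hl => ?_,
        hN₂ _ fun l hl => ?_⟩
      · rw [if_pos (by omega)]
      · simp only [sh]
        rw [if_neg (by omega)]
        simp
    have hO : IsOpen (V ∩ sh k ⁻¹' V') := hV.inter (hV'.preimage (shHomeo k).continuous)
    have hR := inter_mem (gl_realm f) (inter_mem hVr (sh_residual k hVr'))
    obtain ⟨x, ⟨hxV, hxV'⟩, hx1, hx2, hx3⟩ := (dense_of_mem_residual hR).inter_open_nonempty _ hO hne
    obtain ⟨y, hy, hty⟩ := conv hf hid hx1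
    have e1 : word y i u.length = u :=
      (cyl_clopen u i).isClosed.mem_of_frequently_of_tendsto (hx2 hxV) hty
    have e2 : word (sh k y) j v.length = v := by
      refine (cyl_clopen v j).isClosed.mem_of_frequently_of_tendsto (hx3 hxV') ?_
      simp only [iter_sh hf]
      exact ((shHomeo k).continuous.tendsto y).comp hty
    rw [word_sh] at e2
    refine ⟨word y (i + u.length) n, word_length _ _ _, y, hy, i, ?_⟩
    rw [List.length_append, List.length_append, word_length, word_add, word_add, e1]
    congr 1
    rw [← e2, word_length]
    congr 1
    push_cast
    omega

end Gls
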